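/- arXiv:2206.02773 — 3 statements merged into one kernel-verified Lean document; each statement's English description precedes it below -/
import Mathlib

section
/- Let ξ and η be real random variables on a probability space (Ω, ℱ, P), let a, b > 0, and let φ : [0,∞) → ℝ be a function such that E exp(λ ξ) ≤ exp(φ(λ a)) and E exp(λ η) ≤ exp(φ(λ b)) for every λ ≥ 0, where both expectations are finite. Then E exp(λ (ξ + η)) ≤ exp(φ(λ (a + b))) for every λ ≥ 0. -/
open MeasureTheory
open scoped ENNReal

section ExponentialMoments

variable {Ω : Type*} [MeasurableSpace Ω] {μ : Measure Ω} {X Y : Ω → ℝ} {s t : ℝ}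

lemma ofReal_exp_mul_add_mul (s t x y : ℝ) :
    ENNReal.ofReal (Real.exp (s * x + t * y))
      = ENNReal.ofReal (Real.exp x) ^ s * ENNReal.ofReal (Real.exp y) ^ t := by
  rw [ENNReal.ofReal_rpow_of_pos (Real.exp_pos x), ENNReal.ofReal_rpow_of_pos (Real.exp_pos y),
    ← ENNReal.ofReal_mul (by positivity), ← Real.exp_mul, ← Real.exp_mul, ← Real.exp_add,
    mul_comm x, mul_comm y]

lemma lintegral_exp_mul_add_mul_le_rpow_mul_rpow (hX : AEMeasurable X μ) (hY : AEMeasurable Y μ)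
    (hs : 0 ≤ s) (ht : 0 ≤ t) (hst : s + t = 1) :
    ∫⁻ ω, ENNReal.ofReal (Real.exp (s * X ω + t * Y ω)) ∂μ
      ≤ (∫⁻ ω, ENNReal.ofReal (Real.exp (X ω)) ∂μ) ^ s
        * (∫⁻ ω, ENNReal.ofReal (Real.exp (Y ω)) ∂μ) ^ t := by
  simp only [ofReal_exp_mul_add_mul]
  exact ENNReal.lintegral_mul_norm_pow_le (by fun_prop) (by fun_prop) hs ht hst

lemma lintegral_exp_mul_add_mul_le_of_le {C : ℝ≥0∞} (hX : AEMeasurable X μ)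
    (hY : AEMeasurable Y μ) (hs : 0 ≤ s) (ht : 0 ≤ t) (hst : s + t = 1)
    (hXC : ∫⁻ ω, ENNReal.ofReal (Real.exp (X ω)) ∂μ ≤ C)
    (hYC : ∫⁻ ω, ENNReal.ofReal (Real.exp (Y ω)) ∂μ ≤ C) :
    ∫⁻ ω, ENNReal.ofReal (Real.exp (s * X ω + t * Y ω)) ∂μ ≤ C :=
  calc ∫⁻ ω, ENNReal.ofReal (Real.exp (s * X ω + t * Y ω)) ∂μ
      ≤ (∫⁻ ω, ENNReal.ofReal (Real.exp (X ω)) ∂μ) ^ s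
        * (∫⁻ ω, ENNReal.ofReal (Real.exp (Y ω)) ∂μ) ^ t :=
        lintegral_exp_mul_add_mul_le_rpow_mul_rpow hX hY hs ht hst
    _ ≤ C ^ s * C ^ t := by gcongr
    _ = C := by rw [← ENNReal.rpow_add_of_nonneg s t hs ht, hst, ENNReal.rpow_one]

end ExponentialMoments

theorem bphi_triangle_inequality_general
    {Ω : Type*} [MeasurableSpace Ω] {μ : Measure Ω} {ξ η : Ω → ℝ}
    (hξ : AEMeasurable ξ μ) (hη : AEMeasurable η μ)
    {a b : ℝ} (ha : 0 < a) (hb : 0 < b) {Φ : ℝ → ℝ≥0∞}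
    (hξΦ : ∀ l : ℝ, 0 ≤ l → ∫⁻ ω, ENNReal.ofReal (Real.exp (l * ξ ω)) ∂μ ≤ Φ (l * a))
    (hηΦ : ∀ l : ℝ, 0 ≤ l → ∫⁻ ω, ENNReal.ofReal (Real.exp (l * η ω)) ∂μ ≤ Φ (l * b))
    {l : ℝ} (hl : 0 ≤ l) :
    ∫⁻ ω, ENNReal.ofReal (Real.exp (l * (ξ ω + η ω))) ∂μ ≤ Φ (l * (a + b)) := by
  -- Rescaling `l` separately for `ξ` and `η` brings both moments under the same bound.
  have hξ_bound : ∫⁻ ω, ENNReal.ofReal (Real.exp (l * (a + b) / a * ξ ω)) ∂μ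
      ≤ Φ (l * (a + b)) := by
    simpa only [div_mul_cancel₀ _ ha.ne'] using hξΦ (l * (a + b) / a) (by positivity)
  have hη_bound : ∫⁻ ω, ENNReal.ofReal (Real.exp (l * (a + b) / b * η ω)) ∂μ
      ≤ Φ (l * (a + b)) := by
    simpa only [div_mul_cancel₀ _ hb.ne'] using hηΦ (l * (a + b) / b) (by positivity)
  have convex_comb (ω : Ω) : l * (ξ ω + η ω)
      = a / (a + b) * (l * (a + b) / a * ξ ω) + b / (a + b) * (l * (a + b) / b * η ω) := by
    field_simp
  simp only [convex_comb]
  exact lintegral_exp_mul_add_mul_le_of_le (hξ.const_mul _) (hη.const_mul _)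
    (by positivity) (by positivity) (by field_simp) hξ_bound hη_bound

/-- **Triangle inequality for the `B(φ)` norm.** If `E exp(λ ξ) ≤ exp(φ(λ a))` and
`E exp(λ η) ≤ exp(φ(λ b))` for every `λ ≥ 0` (both expectations finite), then
`E exp(λ (ξ + η)) ≤ exp(φ(λ (a + b)))` for every `λ ≥ 0`. -/
theorem bphi_triangle_inequality
    {Ω : Type*} [MeasurableSpace Ω] (P : Measure Ω) [IsProbabilityMeasure P]
    (ξ η : Ω → ℝ) (hξ : Measurable ξ) (hη : Measurable η)
    (a b : ℝ) (ha : 0 < a) (hb : 0 < b) (φ : ℝ → ℝ)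
    (hξm : ∀ l : ℝ, 0 ≤ l →
      ∫⁻ ω, ENNReal.ofReal (Real.exp (l * ξ ω)) ∂P ≤ ENNReal.ofReal (Real.exp (φ (l * a))))
    (hηm : ∀ l : ℝ, 0 ≤ l →
      ∫⁻ ω, ENNReal.ofReal (Real.exp (l * η ω)) ∂P ≤ ENNReal.ofReal (Real.exp (φ (l * b))))
    (l : ℝ) (hl : 0 ≤ l) :
    ∫⁻ ω, ENNReal.ofReal (Real.exp (l * (ξ ω + η ω))) ∂P
      ≤ ENNReal.ofReal (Real.exp (φ (l * (a + b)))) :=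
  bphi_triangle_inequality_general (Φ := fun x => ENNReal.ofReal (Real.exp (φ x)))
    hξ.aemeasurable hη.aemeasurable ha hb hξm hηm hl
end

section
/- Let ξ and η be real random variables on a probability space (Ω, ℱ, P), let a, b > 0, and let φ : [0,∞) → ℝ be a function such that E exp(λ ξ) ≤ exp(φ(λ a)) and E exp(λ η) ≤ exp(φ(λ b)) for every λ ≥ 0, where both expectations are finite. Define ν[φ](x) = sup_{λ ≥ 0} (λ x − φ(λ)). Then for every real u, P(ξ > u and η > u) ≤ exp(− ν[φ](2u / (a + b))). -/
open MeasureTheory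
open scoped ENNReal

/-- `exp(− ν[φ](x))` where `ν[φ](x) = sup_{λ ≥ 0} (λ x − φ(λ))` is the Young–Fenchel
transform of `φ`; equivalently the infimum of `exp(φ(λ) − λ x)` over `λ ≥ 0`. -/
noncomputable def expNegNu (φ : ℝ → ℝ) (x : ℝ) : ℝ≥0∞ :=
  ⨅ l : {l : ℝ // 0 ≤ l}, ENNReal.ofReal (Real.exp (φ l.1 - l.1 * x))

section

variable {Ω : Type*} [MeasurableSpace Ω] {P : Measure Ω} {φ : ℝ → ℝ} {ξ η : Ω → ℝ} {a b : ℝ}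

theorem measure_ge_le_lintegral_exp_div (hξ : AEMeasurable ξ P) {l : ℝ} (hl : 0 ≤ l) (x : ℝ) :
    P {ω | x ≤ ξ ω} ≤
      (∫⁻ ω, ENNReal.ofReal (Real.exp (l * ξ ω)) ∂P) / ENNReal.ofReal (Real.exp (l * x)) := by
  have exp_le_of_le : {ω | x ≤ ξ ω} ⊆
      {ω | ENNReal.ofReal (Real.exp (l * x)) ≤ ENNReal.ofReal (Real.exp (l * ξ ω))} :=
    fun ω (hω : x ≤ ξ ω) ↦ ENNReal.ofReal_le_ofReal (by gcongr)
  have exp_ne_zero : ENNReal.ofReal (Real.exp (l * x)) ≠ 0 :=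
    (ENNReal.ofReal_pos.2 (Real.exp_pos _)).ne'
  exact (measure_mono exp_le_of_le).trans
    (meas_ge_le_lintegral_div (by fun_prop) exp_ne_zero ENNReal.ofReal_ne_top)

theorem ofReal_exp_convexCombination_le {v w : ℝ} (hv : 0 ≤ v) (hw : 0 ≤ w) (hvw : v + w = 1)
    (x y : ℝ) :
    ENNReal.ofReal (Real.exp (v * x + w * y)) ≤
      ENNReal.ofReal v * ENNReal.ofReal (Real.exp x) +
        ENNReal.ofReal w * ENNReal.ofReal (Real.exp y) := by
  rw [← ENNReal.ofReal_mul hv, ← ENNReal.ofReal_mul hw,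
    ← ENNReal.ofReal_add (by positivity) (by positivity)]
  exact ENNReal.ofReal_le_ofReal
    (convexOn_exp.2 (Set.mem_univ x) (Set.mem_univ y) hv hw hvw)

theorem lintegral_exp_convexCombination_le (hξ : AEMeasurable ξ P) {v w : ℝ} (hv : 0 ≤ v)
    (hw : 0 ≤ w) (hvw : v + w = 1) :
    ∫⁻ ω, ENNReal.ofReal (Real.exp (v * ξ ω + w * η ω)) ∂P ≤
      ENNReal.ofReal v * ∫⁻ ω, ENNReal.ofReal (Real.exp (ξ ω)) ∂P +
        ENNReal.ofReal w * ∫⁻ ω, ENNReal.ofReal (Real.exp (η ω)) ∂P := by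
  rw [← lintegral_const_mul' _ _ ENNReal.ofReal_ne_top,
    ← lintegral_const_mul' _ _ ENNReal.ofReal_ne_top, ← lintegral_add_left' (by fun_prop)]
  exact lintegral_mono fun ω ↦ ofReal_exp_convexCombination_le hv hw hvw (ξ ω) (η ω)

/-- `‖ξ‖B(φ) ≤ a`, i.e. `E exp(λ ξ) ≤ exp(φ(λ a))` for all `λ ≥ 0`. The expectation is a lower
Lebesgue integral, so the bound includes its finiteness. -/
def HasBNormLE (φ : ℝ → ℝ) (ξ : Ω → ℝ) (a : ℝ) (P : Measure Ω) : Prop :=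
  ∀ l : ℝ, 0 ≤ l →
    ∫⁻ ω, ENNReal.ofReal (Real.exp (l * ξ ω)) ∂P ≤ ENNReal.ofReal (Real.exp (φ (l * a)))

namespace HasBNormLE

theorem lintegral_exp_div_mul_le (h : HasBNormLE φ ξ a P) (ha : 0 < a) {t : ℝ} (ht : 0 ≤ t) :
    ∫⁻ ω, ENNReal.ofReal (Real.exp (t / a * ξ ω)) ∂P ≤ ENNReal.ofReal (Real.exp (φ t)) := by
  simpa only [div_mul_cancel₀ t ha.ne'] using h (t / a) (by positivity)

/-- With weights `a / (a + b)` and `b / (a + b)`, convexity of `exp` splits `exp (l * (ξ + η))`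
so that both exponential moments are bounded by the same value `exp (φ (l * (a + b)))`. -/
theorem add (hξ : HasBNormLE φ ξ a P) (hη : HasBNormLE φ η b P) (hξm : AEMeasurable ξ P)
    (ha : 0 < a) (hb : 0 < b) : HasBNormLE φ (fun ω ↦ ξ ω + η ω) (a + b) P := by
  intro l hl
  set t := l * (a + b) with ht
  have t_nonneg : 0 ≤ t := by positivity
  have weights_add : a / (a + b) + b / (a + b) = 1 := by field_simp
  have exponent_eq (ω : Ω) : l * (ξ ω + η ω) =
      a / (a + b) * (t / a * ξ ω) + b / (a + b) * (t / b * η ω) := by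
    rw [ht]
    field_simp
  calc ∫⁻ ω, ENNReal.ofReal (Real.exp (l * (ξ ω + η ω))) ∂P
      ≤ ENNReal.ofReal (a / (a + b)) * ∫⁻ ω, ENNReal.ofReal (Real.exp (t / a * ξ ω)) ∂P +
          ENNReal.ofReal (b / (a + b)) * ∫⁻ ω, ENNReal.ofReal (Real.exp (t / b * η ω)) ∂P := by
        simp only [exponent_eq]
        exact lintegral_exp_convexCombination_le (by fun_prop) (by positivity) (by positivity)
          weights_add
    _ ≤ ENNReal.ofReal (a / (a + b)) * ENNReal.ofReal (Real.exp (φ t)) +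
          ENNReal.ofReal (b / (a + b)) * ENNReal.ofReal (Real.exp (φ t)) := by
        gcongr
        · exact hξ.lintegral_exp_div_mul_le ha t_nonneg
        · exact hη.lintegral_exp_div_mul_le hb t_nonneg
    _ = ENNReal.ofReal (Real.exp (φ t)) := by
        rw [← add_mul, ← ENNReal.ofReal_add (by positivity) (by positivity), weights_add,
          ENNReal.ofReal_one, one_mul]

theorem measure_ge_le_expNegNu (h : HasBNormLE φ ξ a P) (hξ : AEMeasurable ξ P) (ha : 0 < a)
    (x : ℝ) : P {ω | x ≤ ξ ω} ≤ expNegNu φ (x / a) := by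
  refine le_iInf fun ⟨t, ht⟩ ↦ ?_
  calc P {ω | x ≤ ξ ω}
      ≤ (∫⁻ ω, ENNReal.ofReal (Real.exp (t / a * ξ ω)) ∂P) /
          ENNReal.ofReal (Real.exp (t / a * x)) :=
        measure_ge_le_lintegral_exp_div hξ (by positivity) x
    _ ≤ ENNReal.ofReal (Real.exp (φ t)) / ENNReal.ofReal (Real.exp (t / a * x)) := by
        gcongr
        exact h.lintegral_exp_div_mul_le ha ht
    _ = ENNReal.ofReal (Real.exp (φ t - t * (x / a))) := by
        rw [← ENNReal.ofReal_div_of_pos (Real.exp_pos _), ← Real.exp_sub, div_mul_eq_mul_div,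
          mul_div_assoc]

end HasBNormLE

theorem joint_tail_upper_estimate_general (hξ : AEMeasurable ξ P) (hη : AEMeasurable η P)
    (ha : 0 < a) (hb : 0 < b) (hξa : HasBNormLE φ ξ a P) (hηb : HasBNormLE φ η b P) (u v : ℝ) :
    P {ω | u ≤ ξ ω ∧ v ≤ η ω} ≤ expNegNu φ ((u + v) / (a + b)) :=
  calc P {ω | u ≤ ξ ω ∧ v ≤ η ω}
      ≤ P {ω | u + v ≤ ξ ω + η ω} := measure_mono fun _ hω ↦ add_le_add hω.1 hω.2
    _ ≤ expNegNu φ ((u + v) / (a + b)) :=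
      (hξa.add hηb hξ ha hb).measure_ge_le_expNegNu (hξ.add hη) (add_pos ha hb) (u + v)

end

/-- **Joint-tail estimate (4.2).** If `‖ξ‖B(φ) ≤ a` and `‖η‖B(φ) ≤ b`
(with finite exponential moments), then for every real `u`,
`P(ξ > u, η > u) ≤ exp(− ν[φ](2u/(a+b)))`. -/
theorem joint_tail_upper_estimate
    {Ω : Type*} [MeasurableSpace Ω] (P : Measure Ω) [IsProbabilityMeasure P]
    (ξ η : Ω → ℝ) (hξ : Measurable ξ) (hη : Measurable η)
    (a b : ℝ) (ha : 0 < a) (hb : 0 < b) (φ : ℝ → ℝ)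
    (hξm : ∀ l : ℝ, 0 ≤ l →
      ∫⁻ ω, ENNReal.ofReal (Real.exp (l * ξ ω)) ∂P ≤ ENNReal.ofReal (Real.exp (φ (l * a))))
    (hηm : ∀ l : ℝ, 0 ≤ l →
      ∫⁻ ω, ENNReal.ofReal (Real.exp (l * η ω)) ∂P ≤ ENNReal.ofReal (Real.exp (φ (l * b))))
    (u : ℝ) :
    P {ω | ξ ω > u ∧ η ω > u} ≤ expNegNu φ (2 * u / (a + b)) := by
  rw [two_mul]
  refine le_trans (measure_mono ?_)
    (joint_tail_upper_estimate_general hξ.aemeasurable hη.aemeasurable ha hb hξm hηm u u)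
  exact fun _ hω ↦ ⟨hω.1.le, hω.2.le⟩
end

section
/- Let (ξ_1, ξ_2) be a pair of real random variables on a probability space (Ω, ℱ, P), let σ_1, σ_2 > 0 and ρ with |ρ| < 1 satisfy ρ σ_1 ≤ σ_2 and ρ σ_2 ≤ σ_1, and assume that for all real λ_1, λ_2, E exp(λ_1 ξ_1 + λ_2 ξ_2) ≤ exp( (σ_1² λ_1² + 2 ρ σ_1 σ_2 λ_1 λ_2 + σ_2² λ_2²) / 2 ). Then for every u ≥ 1, P(min(ξ_1, ξ_2) > u) ≤ exp( − (u² / (2 (1 − ρ²))) · (σ_1² + σ_2² − 2 ρ σ_1 σ_2) / (σ_1² σ_2²) ). -/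
open MeasureTheory
open scoped ENNReal

/-!
For nonnegative weights `l`, the event `u ≤ X` forces `l ⬝ᵥ u ≤ l ⬝ᵥ X`, so Markov's inequality for
`exp (l ⬝ᵥ X)` bounds its probability by `exp (l ⬝ᵥ S *ᵥ l / 2 - l ⬝ᵥ u)`. This exponent is minimal
where `S *ᵥ l = u`, and there it equals `-(l ⬝ᵥ u) / 2`. For two coordinates the system is solved by
Cramer's rule, and the conditions on `ρ` say exactly that the solution is nonnegative.
-/

open scoped Matrix

section Chernoff

variable {Ω : Type*} [MeasurableSpace Ω] {P : Measure Ω}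

theorem measure_ge_le_exp_mul_lintegral_exp {Y : Ω → ℝ} (hY : AEMeasurable Y P) (c : ℝ) :
    P {ω | c ≤ Y ω} ≤
      ENNReal.ofReal (Real.exp (-c)) * ∫⁻ ω, ENNReal.ofReal (Real.exp (Y ω)) ∂P := by
  have hexp : AEMeasurable (fun ω ↦ ENNReal.ofReal (Real.exp (Y ω))) P := by fun_prop
  have hmarkov := meas_ge_le_lintegral_div hexp (ε := ENNReal.ofReal (Real.exp c))
    (by simp [Real.exp_pos]) ENNReal.ofReal_ne_top
  simpa only [ENNReal.ofReal_le_ofReal_iff (Real.exp_pos _).le, Real.exp_le_exp,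
    ENNReal.div_eq_inv_mul, ← ENNReal.ofReal_inv_of_pos (Real.exp_pos _), ← Real.exp_neg]
    using hmarkov

variable {ι : Type*} [Fintype ι]

theorem measure_ge_le_exp_mul_lintegral_exp_dotProduct {X : Ω → ι → ℝ} (hX : AEMeasurable X P)
    {l : ι → ℝ} (hl : 0 ≤ l) (u : ι → ℝ) :
    P {ω | u ≤ X ω} ≤
      ENNReal.ofReal (Real.exp (-(l ⬝ᵥ u))) *
        ∫⁻ ω, ENNReal.ofReal (Real.exp (l ⬝ᵥ X ω)) ∂P := by
  have hlX : AEMeasurable (fun ω ↦ l ⬝ᵥ X ω) P := by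
    unfold dotProduct
    fun_prop
  have hsubset : {ω | u ≤ X ω} ⊆ {ω | l ⬝ᵥ u ≤ l ⬝ᵥ X ω} :=
    fun _ hω ↦ dotProduct_le_dotProduct_of_nonneg_left hω hl
  exact (measure_mono hsubset).trans (measure_ge_le_exp_mul_lintegral_exp hlX _)

/-- The random vector `X` is subgaussian with covariance proxy `S`: its moment generating function
is dominated by that of the centered Gaussian vector with covariance `S`. The expectation is a lower
Lebesgue integral, so that the bound includes its finiteness. -/
def HasSubgaussianVectorMGF (X : Ω → ι → ℝ) (S : Matrix ι ι ℝ) (P : Measure Ω) : Prop :=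
  ∀ l : ι → ℝ, ∫⁻ ω, ENNReal.ofReal (Real.exp (l ⬝ᵥ X ω)) ∂P ≤
    ENNReal.ofReal (Real.exp (l ⬝ᵥ S *ᵥ l / 2))

theorem HasSubgaussianVectorMGF.measure_mulVec_le_le {X : Ω → ι → ℝ} {S : Matrix ι ι ℝ}
    (h : HasSubgaussianVectorMGF X S P) (hX : AEMeasurable X P) {l : ι → ℝ} (hl : 0 ≤ l) :
    P {ω | S *ᵥ l ≤ X ω} ≤ ENNReal.ofReal (Real.exp (-(l ⬝ᵥ S *ᵥ l) / 2)) :=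
  calc
    P {ω | S *ᵥ l ≤ X ω}
      ≤ ENNReal.ofReal (Real.exp (-(l ⬝ᵥ S *ᵥ l))) *
          ∫⁻ ω, ENNReal.ofReal (Real.exp (l ⬝ᵥ X ω)) ∂P :=
        measure_ge_le_exp_mul_lintegral_exp_dotProduct hX hl _
    _ ≤ ENNReal.ofReal (Real.exp (-(l ⬝ᵥ S *ᵥ l))) *
          ENNReal.ofReal (Real.exp (l ⬝ᵥ S *ᵥ l / 2)) := by
        gcongr
        exact h l
    _ = ENNReal.ofReal (Real.exp (-(l ⬝ᵥ S *ᵥ l) / 2)) := by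
        rw [← ENNReal.ofReal_mul (Real.exp_pos _).le, ← Real.exp_add]
        ring_nf

end Chernoff

section Bivariate

/-- The covariance matrix of two variables with standard deviations `σ₁`, `σ₂` and correlation `ρ`,
which serves as the covariance proxy of a bivariate subgaussian vector. -/
def bivariateCovariance (σ₁ σ₂ ρ : ℝ) : Matrix (Fin 2) (Fin 2) ℝ :=
  !![σ₁ ^ 2, ρ * σ₁ * σ₂; ρ * σ₁ * σ₂, σ₂ ^ 2]

/-- The optimal Chernoff weights for the thresholds `u₁`, `u₂`: the solution `l` of
`bivariateCovariance σ₁ σ₂ ρ *ᵥ l = ![u₁, u₂]` given by Cramer's rule, with the common factor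
`σ₁` or `σ₂` cancelled in each coordinate. -/
noncomputable def bivariateChernoffWeight (σ₁ σ₂ ρ u₁ u₂ : ℝ) : Fin 2 → ℝ :=
  ![(σ₂ * u₁ - ρ * σ₁ * u₂) / ((1 - ρ ^ 2) * σ₁ ^ 2 * σ₂),
    (σ₁ * u₂ - ρ * σ₂ * u₁) / ((1 - ρ ^ 2) * σ₁ * σ₂ ^ 2)]

variable {Ω : Type*} [MeasurableSpace Ω] {P : Measure Ω} {σ₁ σ₂ ρ u₁ u₂ : ℝ}

theorem dotProduct_bivariateCovariance_mulVec (l : Fin 2 → ℝ) :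
    l ⬝ᵥ bivariateCovariance σ₁ σ₂ ρ *ᵥ l =
      σ₁ ^ 2 * l 0 ^ 2 + 2 * ρ * σ₁ * σ₂ * l 0 * l 1 + σ₂ ^ 2 * l 1 ^ 2 := by
  simp only [bivariateCovariance, dotProduct, Matrix.mulVec, Fin.sum_univ_two, Matrix.of_apply,
    Matrix.cons_val_zero, Matrix.cons_val_one]
  ring

theorem bivariateCovariance_mulVec_bivariateChernoffWeight (hσ₁ : σ₁ ≠ 0) (hσ₂ : σ₂ ≠ 0)
    (hρ : 1 - ρ ^ 2 ≠ 0) :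
    bivariateCovariance σ₁ σ₂ ρ *ᵥ bivariateChernoffWeight σ₁ σ₂ ρ u₁ u₂ = ![u₁, u₂] := by
  ext i
  fin_cases i
  all_goals
    simp only [bivariateCovariance, bivariateChernoffWeight, Matrix.mulVec, dotProduct,
      Fin.sum_univ_two, Fin.zero_eta, Fin.mk_one, Matrix.of_apply, Matrix.cons_val_zero,
      Matrix.cons_val_one]
    field_simp
    ring

theorem bivariateChernoffWeight_nonneg (hσ₁ : 0 < σ₁) (hσ₂ : 0 < σ₂) (hρ : 0 < 1 - ρ ^ 2)
    (h₁ : ρ * σ₁ * u₂ ≤ σ₂ * u₁) (h₂ : ρ * σ₂ * u₁ ≤ σ₁ * u₂) :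
    0 ≤ bivariateChernoffWeight σ₁ σ₂ ρ u₁ u₂ := by
  intro i
  fin_cases i
  · exact div_nonneg (sub_nonneg.2 h₁) (by positivity)
  · exact div_nonneg (sub_nonneg.2 h₂) (by positivity)

theorem bivariateChernoffWeight_dotProduct (hσ₁ : σ₁ ≠ 0) (hσ₂ : σ₂ ≠ 0) :
    bivariateChernoffWeight σ₁ σ₂ ρ u₁ u₂ ⬝ᵥ ![u₁, u₂] =
      (σ₂ ^ 2 * u₁ ^ 2 + σ₁ ^ 2 * u₂ ^ 2 - 2 * ρ * σ₁ * σ₂ * u₁ * u₂) /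
        ((1 - ρ ^ 2) * (σ₁ ^ 2 * σ₂ ^ 2)) := by
  simp only [bivariateChernoffWeight, dotProduct, Fin.sum_univ_two, Matrix.cons_val_zero,
    Matrix.cons_val_one]
  field_simp
  ring

theorem bivariate_subgaussian_min_tail_general {ξ₁ ξ₂ : Ω → ℝ} (hξ₁ : AEMeasurable ξ₁ P)
    (hξ₂ : AEMeasurable ξ₂ P) (hσ₁ : 0 < σ₁) (hσ₂ : 0 < σ₂) (hρ : |ρ| < 1)
    (h₁ : ρ * σ₁ * u₂ ≤ σ₂ * u₁) (h₂ : ρ * σ₂ * u₁ ≤ σ₁ * u₂)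
    (hmgf : ∀ l₁ l₂ : ℝ,
      ∫⁻ ω, ENNReal.ofReal (Real.exp (l₁ * ξ₁ ω + l₂ * ξ₂ ω)) ∂P
        ≤ ENNReal.ofReal (Real.exp
            ((σ₁ ^ 2 * l₁ ^ 2 + 2 * ρ * σ₁ * σ₂ * l₁ * l₂ + σ₂ ^ 2 * l₂ ^ 2) / 2))) :
    P {ω | u₁ ≤ ξ₁ ω ∧ u₂ ≤ ξ₂ ω} ≤
      ENNReal.ofReal (Real.exp
        (-((σ₂ ^ 2 * u₁ ^ 2 + σ₁ ^ 2 * u₂ ^ 2 - 2 * ρ * σ₁ * σ₂ * u₁ * u₂) /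
          ((1 - ρ ^ 2) * (σ₁ ^ 2 * σ₂ ^ 2))) / 2)) := by
  have hρ_sq : 0 < 1 - ρ ^ 2 := sub_pos.2 ((sq_lt_one_iff_abs_lt_one ρ).2 hρ)
  have hmeas : AEMeasurable (fun ω ↦ ![ξ₁ ω, ξ₂ ω]) P :=
    aemeasurable_pi_lambda _ (Fin.forall_fin_two.2 ⟨hξ₁, hξ₂⟩)
  have hsubgaussian :
      HasSubgaussianVectorMGF (fun ω ↦ ![ξ₁ ω, ξ₂ ω]) (bivariateCovariance σ₁ σ₂ ρ) P := by
    intro l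
    rw [dotProduct_bivariateCovariance_mulVec]
    simpa [dotProduct] using hmgf (l 0) (l 1)
  have htail := hsubgaussian.measure_mulVec_le_le hmeas
    (bivariateChernoffWeight_nonneg hσ₁ hσ₂ hρ_sq h₁ h₂)
  rw [bivariateCovariance_mulVec_bivariateChernoffWeight hσ₁.ne' hσ₂.ne' hρ_sq.ne',
    bivariateChernoffWeight_dotProduct hσ₁.ne' hσ₂.ne'] at htail
  simpa [Pi.le_def, Fin.forall_fin_two] using htail

end Bivariate

/-- **Estimate (6.2)–(6.3): minimum tail of a bivariate subgaussian vector.**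
If `(ξ 1, ξ 2)` is subgaussian with parameters `σ 1, σ 2 > 0` and subgaussian correlation
`ρ`, `|ρ| < 1`, with `ρ σ 1 ≤ σ 2` and `ρ σ 2 ≤ σ 1`, then for every `u ≥ 1`,
`P(min(ξ 1, ξ 2) > u) ≤ exp(−(u²/(2(1−ρ²))) (σ 1² + σ 2² − 2ρ σ 1 σ 2)/(σ 1² σ 2²))`. -/
theorem bivariate_subgaussian_min_tail
    {Ω : Type*} [MeasurableSpace Ω] (P : Measure Ω) [IsProbabilityMeasure P]
    (ξ₁ ξ₂ : Ω → ℝ) (hξ₁ : Measurable ξ₁) (hξ₂ : Measurable ξ₂)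
    (σ₁ σ₂ ρ : ℝ) (hσ₁ : 0 < σ₁) (hσ₂ : 0 < σ₂) (hρ : |ρ| < 1)
    (hρ₁ : ρ * σ₁ ≤ σ₂) (hρ₂ : ρ * σ₂ ≤ σ₁)
    (hmgf : ∀ l₁ l₂ : ℝ,
      ∫⁻ ω, ENNReal.ofReal (Real.exp (l₁ * ξ₁ ω + l₂ * ξ₂ ω)) ∂P
        ≤ ENNReal.ofReal (Real.exp
            ((σ₁ ^ 2 * l₁ ^ 2 + 2 * ρ * σ₁ * σ₂ * l₁ * l₂ + σ₂ ^ 2 * l₂ ^ 2) / 2)))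
    (u : ℝ) (hu : 1 ≤ u) :
    P {ω | min (ξ₁ ω) (ξ₂ ω) > u}
      ≤ ENNReal.ofReal (Real.exp (-(u ^ 2 / (2 * (1 - ρ ^ 2)))
          * ((σ₁ ^ 2 + σ₂ ^ 2 - 2 * ρ * σ₁ * σ₂) / (σ₁ ^ 2 * σ₂ ^ 2)))) := by
  have hu₀ : 0 ≤ u := zero_le_one.trans hu
  have htail := bivariate_subgaussian_min_tail_general hξ₁.aemeasurable hξ₂.aemeasurable hσ₁ hσ₂ hρ
    (mul_le_mul_of_nonneg_right hρ₁ hu₀) (mul_le_mul_of_nonneg_right hρ₂ hu₀) hmgf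
  refine (measure_mono fun ω hω ↦ le_min_iff.1 (le_of_lt hω)).trans (htail.trans_eq ?_)
  congr 2
  field_simp
  ring
end
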